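/- Let F = (f_1,f_2) be in ℤ[x,y], generating a zero-dimensional ideal I in ℚ[x,y], with both f_i of total degree at most d ≥ 1 and all integer coefficients of absolute value at most e^h. Let G = (g_0,…,g_s) be the reduced minimal lexicographic Gröbner basis of I (for x ≺ y). Then there exists a nonzero integer β such that: (a) β·g_j ∈ ℤ[x,y] for all j; (b) |β| ≤ exp(C(2,d,Δ_2(d),h)) and every coefficient of every β·g_j has absolute value at most exp(C(2,d,Δ_2(d),h)); and (c) for every prime p not dividing β, the images of g_0,…,g_s in F_p[x,y] (well defined since all denominators divide β) form the reduced minimal lexicographic Gröbner basis of the ideal generated by f_1 mod p, f_2 mod p in F_p[x,y]. -/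

import Mathlib

noncomputable section

open Polynomial

/-- Bivariate polynomials `k[x][y]`: the inner `X` is `x`, the outer `X` is `y`. -/
abbrev Biv (k : Type*) [CommRing k] : Type _ := Polynomial (Polynomial k)

variable {k : Type*} [CommRing k]

/-- The leading monomial of `f`, as the pair (y-exponent, x-exponent), for the
lexicographic order induced by `x ≺ y`. -/
def lmon (f : Biv k) : ℕ × ℕ := (f.natDegree, f.leadingCoeff.natDegree)

/-- Divisibility of monomials: `x^{p.2} y^{p.1}` divides `x^{q.2} y^{q.1}`. -/
def monDvd (p q : ℕ × ℕ) : Prop := p.1 ≤ q.1 ∧ p.2 ≤ q.2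

/-- Lexicographic comparison of monomials, `y`-exponent first. -/
def monLt (p q : ℕ × ℕ) : Prop := p.1 < q.1 ∨ (p.1 = q.1 ∧ p.2 < q.2)

/-- The monomial `x^{m.2} y^{m.1}` occurs in `f` (has a nonzero coefficient). -/
def occursIn (f : Biv k) (m : ℕ × ℕ) : Prop := (f.coeff m.1).coeff m.2 ≠ 0

/-- `G` is a Gröbner basis of `I` for the lexicographic order with `x ≺ y`:
its elements are nonzero elements of `I`, and the leading monomial of any nonzero
element of `I` is divisible by the leading monomial of some element of `G`. -/
def IsGB (G : List (Biv k)) (I : Ideal (Biv k)) : Prop :=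
  (∀ g ∈ G, g ≠ 0 ∧ g ∈ I) ∧
  ∀ f ∈ I, f ≠ 0 → ∃ g ∈ G, monDvd (lmon g) (lmon f)

/-- `f` is monic w.r.t. lex `x ≺ y`: the coefficient of its leading monomial is `1`. -/
def lexMonic (f : Biv k) : Prop := f.leadingCoeff.Monic

/-- `g 0, …, g s` is the reduced minimal lexicographic Gröbner basis of `I`,
listed in decreasing order of leading monomials. -/
def IsReducedGB {s : ℕ} (g : Fin (s + 1) → Biv k) (I : Ideal (Biv k)) : Prop :=
  IsGB (List.ofFn g) I ∧
  (∀ j, lexMonic (g j)) ∧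
  (∀ j l, j ≠ l → ∀ m : ℕ × ℕ, occursIn (g j) m → ¬ monDvd (lmon (g l)) m) ∧
  (∀ j l : Fin (s + 1), j < l → monLt (lmon (g l)) (lmon (g j)))

/-- Every monomial of `f` of `y`-degree `< i` is reduced w.r.t. the family `g`. -/
def reducedBelow {s : ℕ} (g : Fin (s + 1) → Biv k) (i : ℕ) (f : Biv k) : Prop :=
  ∀ m : ℕ × ℕ, m.1 < i → occursIn f m → ∀ j, ¬ monDvd (lmon (g j)) m

/-- `A` is the detaching sequence associated to the reduced Gröbner basis `g` of `I`:
`A i = 0` for `i < n_s`, `A (n_j) = g j`, and otherwise `A i` is obtained from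
`y * A (i-1)` by reducing the terms of `y`-degree `< i` modulo `g`
(so `A i - y * A (i-1)` lies in `I` and has `y`-degree `< i`, and the part of `A i`
of `y`-degree `< i` is reduced w.r.t. `g`). -/
def IsDetachingSeq {s : ℕ} (g : Fin (s + 1) → Biv k) (I : Ideal (Biv k))
    (A : ℕ → Biv k) : Prop :=
  (∀ i, i < (g (Fin.last s)).natDegree → A i = 0) ∧
  (∀ j, A ((g j).natDegree) = g j) ∧
  (∀ i, (g (Fin.last s)).natDegree ≤ i → (∀ j, (g j).natDegree ≠ i) →
    (A i - Polynomial.X * A (i - 1)) ∈ I ∧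
    (A i - Polynomial.X * A (i - 1)).degree < (i : WithBot ℕ) ∧
    reducedBelow g i (A i))

/-- The total degree of a bivariate polynomial `f ∈ k[x][y]`. -/
def totDeg {k : Type*} [CommRing k] (f : Biv k) : ℕ :=
  f.support.sup fun j => j + (f.coeff j).natDegree

/-- The height bound `B(n,d,h) = (N+1)h + N log N + log(n(d+1))` with
`N = n²d − nd + n`, for Hermite normal forms of `n × n` matrices of degree `≤ d`
and height `≤ h` over `ℤ[x]`. -/
def Bfun (n d : ℕ) (h : ℝ) : ℝ :=
  (((n ^ 2 * d - n * d + n : ℕ) : ℝ) + 1) * h +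
    ((n ^ 2 * d - n * d + n : ℕ) : ℝ) * Real.log ((n ^ 2 * d - n * d + n : ℕ) : ℝ) +
    Real.log ((n : ℝ) * ((d : ℝ) + 1))

/-- The height bound `C(t,d,D,h) = B(tD,d,h) + h + log 2`. -/
def Cfun (t d D : ℕ) (h : ℝ) : ℝ := Bfun (t * D) d h + h + Real.log 2

/-- `Δ₁(d_y) = d_y`. -/
def Delta1 (dy : ℕ) : ℕ := dy

/-- `Δ₂(d) = 2d′² + d′` with `d′ = max(d,3)`. -/
def Delta2 (d : ℕ) : ℕ := 2 * max d 3 ^ 2 + max d 3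

/-- `Δ₃(d) = 16d′⁴ + 2d′² + 2d′` with `d′ = max(d,3)`. -/
def Delta3 (d : ℕ) : ℕ := 16 * max d 3 ^ 4 + 2 * max d 3 ^ 2 + 2 * max d 3

/-- The inclusion `ℤ[x,y] → ℚ[x,y]`. -/
def toQ : Biv ℤ →+* Biv ℚ :=
  Polynomial.mapRingHom (Polynomial.mapRingHom (Int.castRingHom ℚ))

/-- The reduction `ℤ[x,y] → F_p[x,y]`. -/
def toP (p : ℕ) : Biv ℤ →+* Biv (ZMod p) :=
  Polynomial.mapRingHom (Polynomial.mapRingHom (Int.castRingHom (ZMod p)))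


/-!
Since `ℚ[x,y]/I` is finite-dimensional, `f₁` and `f₂` are coprime, and after a generic shear one of
them is monic in `y`. Division by it gives Bézout's bound `dim ℚ[x,y]/I ≤ d²`, and shows that any
element of `I` of degree `m` has cofactors of degree at most `m + d² + 2d`. The monomials properly
dividing a monomial of a reduced basis element are standard, so every `gⱼ` has degree at most `d²`.
Hence all the `gⱼ` are rational combinations of the rows `xᵃ yᵇ fᵢ`, `a, b ≤ 2d² + 2d`.

A polynomial of `I` is determined by its coefficients at the non-standard monomials, and for `gⱼ`
these are `1` at the leading monomial and `0` elsewhere. So the `gⱼ` solve linear systems with a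
common matrix, and Cramer's rule gives a common denominator `β` which is a minor of the Macaulay
matrix; the coefficients of `β gⱼ` are minors as well, and counting rows gives the height bound.
Cramer's rule also exhibits `β gⱼ` as an element of the ideal of `ℤ[x,y]` generated by `f₁, f₂`.
Consequently the `gⱼ` lie in the ideal generated over `ℤ[1/β]`, where they are monic and reduction
modulo them is available; it commutes with `ℤ[1/β] → 𝔽ₚ`, so the `gⱼ` remain a Gröbner basis modulo
`p ∤ β`.
-/

section Monomials

/-- The monomials of `k[x][y]` as a `k`-basis; `m` indexes `y ^ m.1 * x ^ m.2`, in the order of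
exponents used by `lmon`. -/
def monBasis (k : Type*) [CommRing k] : Module.Basis (ℕ × ℕ) k (Biv k) :=
  (basisMonomials k).smulTower' (basisMonomials k[X])

lemma monBasis_apply (m : ℕ × ℕ) : monBasis k m = monomial m.1 (monomial m.2 1) := by
  simp [monBasis, Module.Basis.smulTower'_apply, smul_monomial]

lemma monBasis_repr_apply (p : Biv k) (m : ℕ × ℕ) :
    (monBasis k).repr p m = (p.coeff m.1).coeff m.2 :=
  Module.Basis.smulTower'_repr_mk ..

lemma monBasis_mul (m n : ℕ × ℕ) : monBasis k m * monBasis k n = monBasis k (m + n) := by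
  simp [monBasis_apply, monomial_mul_monomial]

lemma coeff_coeff_monBasis_mul (m n : ℕ × ℕ) (p : Biv k) :
    ((monBasis k m * p).coeff n.1).coeff n.2 =
      if m ≤ n then (p.coeff (n.1 - m.1)).coeff (n.2 - m.2) else 0 := by
  rw [monBasis_apply, ← C_mul_X_pow_eq_monomial, mul_assoc, coeff_C_mul, coeff_X_pow_mul',
    ← X_pow_eq_monomial]
  split_ifs <;> grind [coeff_X_pow_mul', coeff_zero, Prod.le_def]

/-- The `k`-module of polynomials all of whose monomials lie in `S`. -/
def supportedOn (k : Type*) [CommRing k] (S : Set (ℕ × ℕ)) : Submodule k (Biv k) :=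
  .span k (monBasis k '' S)

lemma mem_supportedOn {S : Set (ℕ × ℕ)} {p : Biv k} :
    p ∈ supportedOn k S ↔ ∀ m, occursIn p m → m ∈ S := by
  simp only [supportedOn, Module.Basis.mem_span_image, Set.subset_def, Finset.mem_coe,
    Finsupp.mem_support_iff, monBasis_repr_apply, occursIn]

lemma monBasis_mem_supportedOn {S : Set (ℕ × ℕ)} {m : ℕ × ℕ} (hm : m ∈ S) :
    monBasis k m ∈ supportedOn k S :=
  Submodule.subset_span ⟨m, hm, rfl⟩

lemma supportedOn_mono {S T : Set (ℕ × ℕ)} (h : S ⊆ T) : supportedOn k S ≤ supportedOn k T :=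
  Submodule.span_mono (Set.image_mono h)

open scoped Pointwise in
lemma mul_mem_supportedOn_add {S T : Set (ℕ × ℕ)} {p q : Biv k} (hp : p ∈ supportedOn k S)
    (hq : q ∈ supportedOn k T) : p * q ∈ supportedOn k (S + T) := by
  have hpq := Submodule.mul_mem_mul hp hq
  rw [supportedOn, supportedOn, Submodule.span_mul_span] at hpq
  refine Submodule.span_mono ?_ hpq
  rintro _ ⟨_, ⟨m, hm, rfl⟩, _, ⟨n, hn, rfl⟩, rfl⟩
  exact ⟨m + n, Set.add_mem_add hm hn, (monBasis_mul m n).symm⟩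

instance finite_supportedOn (s : Finset (ℕ × ℕ)) :
    Module.Finite k (supportedOn k (s : Set (ℕ × ℕ))) :=
  Module.Finite.span_of_finite k (s.finite_toSet.image _)

lemma finrank_supportedOn [Nontrivial k] (s : Finset (ℕ × ℕ)) :
    Module.finrank k (supportedOn k (s : Set (ℕ × ℕ))) = s.card := by
  have hspan : supportedOn k (s : Set (ℕ × ℕ)) =
      .span k (Set.range (monBasis k ∘ ((↑) : s → ℕ × ℕ))) := by
    rw [Set.range_comp, Subtype.range_coe]
    rfl
  rw [hspan, finrank_span_eq_card
    ((monBasis k).linearIndependent.comp _ Subtype.val_injective), Fintype.card_coe]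

end Monomials

section TotalDegree

/-- Polynomials of total degree at most `m`. -/
def totDegLE (k : Type*) [CommRing k] (m : ℕ) : Submodule k (Biv k) :=
  supportedOn k {c | c.1 + c.2 ≤ m}

lemma mem_totDegLE {m : ℕ} {p : Biv k} :
    p ∈ totDegLE k m ↔ ∀ a b, m < a + b → (p.coeff a).coeff b = 0 := by
  simp only [totDegLE, mem_supportedOn, occursIn, Set.mem_ofPred_eq, Prod.forall]
  exact forall₂_congr fun a b => by rw [not_imp_comm, not_le]

lemma totDegLE_mono {m n : ℕ} (h : m ≤ n) : totDegLE k m ≤ totDegLE k n :=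
  supportedOn_mono fun _ hc => le_trans hc h

lemma mul_mem_totDegLE {m n : ℕ} {p q : Biv k} (hp : p ∈ totDegLE k m) (hq : q ∈ totDegLE k n) :
    p * q ∈ totDegLE k (m + n) := by
  refine supportedOn_mono ?_ (mul_mem_supportedOn_add hp hq)
  rintro _ ⟨b, hb, c, hc, rfl⟩
  simp only [Set.mem_ofPred_eq, Prod.fst_add, Prod.snd_add] at hb hc ⊢
  lia

lemma one_mem_totDegLE : (1 : Biv k) ∈ totDegLE k 0 := by
  have h1 : monBasis k 0 ∈ totDegLE k 0 := monBasis_mem_supportedOn (by simp)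
  simpa [monBasis_apply] using h1

lemma pow_mem_totDegLE {m : ℕ} {p : Biv k} (hp : p ∈ totDegLE k m) (n : ℕ) :
    p ^ n ∈ totDegLE k (n * m) := by
  induction n with
  | zero => simpa using one_mem_totDegLE
  | succ n ih => rw [pow_succ, Nat.succ_mul]; exact mul_mem_totDegLE ih hp

lemma natDegree_le_of_mem_totDegLE {m : ℕ} {p : Biv k} (hp : p ∈ totDegLE k m) :
    p.natDegree ≤ m := by
  refine natDegree_le_iff_coeff_eq_zero.2 fun a ha => ?_
  ext b
  exact mem_totDegLE.1 hp a b (by lia)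

lemma mem_totDegLE_totDeg (p : Biv k) : p ∈ totDegLE k (totDeg p) := by
  refine mem_totDegLE.2 fun a b hab => ?_
  by_contra hne
  have ha : a ∈ p.support := mem_support_iff.2 fun h0 => hne (by simp [h0])
  have hle : a + (p.coeff a).natDegree ≤ totDeg p :=
    Finset.le_sup (f := fun j => j + (p.coeff j).natDegree) ha
  have := le_natDegree_of_ne_zero hne
  lia

lemma monomial_coeff_mem_totDegLE {m n a i : ℕ} {p : Biv k} (hp : p ∈ totDegLE k m)
    (h : i + m ≤ n + a) : monomial i (p.coeff a) ∈ totDegLE k n := by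
  refine mem_totDegLE.2 fun a' b hab => ?_
  rw [coeff_monomial]
  split_ifs with hi
  · exact mem_totDegLE.1 hp a b (by lia)
  · rfl

lemma mem_totDegLE_of_C_mul_mem [NoZeroDivisors k] {r : k[X]} (hr : r ≠ 0) {p : Biv k} {m : ℕ}
    (h : C r * p ∈ totDegLE k m) : p ∈ totDegLE k m := by
  refine mem_totDegLE.2 fun i j hij => ?_
  by_cases h0 : p.coeff i = 0
  · simp [h0]
  have hle : i + (r * p.coeff i).natDegree ≤ m := by
    by_contra! hlt
    have := mem_totDegLE.1 h i _ hlt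
    rw [coeff_C_mul] at this
    exact leadingCoeff_ne_zero.2 (mul_ne_zero hr h0) this
  rw [natDegree_mul hr h0] at hle
  exact coeff_eq_zero_of_natDegree_lt (by lia)

lemma exists_div_mod_mem_totDegLE [Nontrivial k] {F : Biv k} (hF : F.Monic)
    (hFt : F ∈ totDegLE k F.natDegree) {m : ℕ} (p : Biv k) (hp : p ∈ totDegLE k m) :
    ∃ q ∈ totDegLE k m, ∃ r ∈ totDegLE k m, r + F * q = p ∧ r.degree < F.degree := by
  induction hn : p.degree using WellFoundedLT.induction generalizing p with
  | ind n ih =>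
  subst hn
  by_cases hlt : p.degree < F.degree
  · exact ⟨0, zero_mem _, p, hp, by simp, hlt⟩
  have hp0 : p ≠ 0 := fun h0 => hlt (by simpa [h0, bot_lt_iff_ne_bot] using hF.ne_zero)
  have hle : F.natDegree ≤ p.natDegree := natDegree_le_natDegree (not_lt.1 hlt)
  have hpm := natDegree_le_of_mem_totDegLE hp
  let t : Biv k := monomial (p.natDegree - F.natDegree) (p.coeff p.natDegree)
  have ht : t ∈ totDegLE k (m - F.natDegree) := monomial_coeff_mem_totDegLE hp (by lia)
  have hFtm : F * t ∈ totDegLE k m :=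
    totDegLE_mono (by lia) (mul_mem_totDegLE hFt ht)
  have hdeg : (p - F * t).degree < p.degree := by
    simpa only [t, ← C_mul_X_pow_eq_monomial] using! div_wf_lemma ⟨not_lt.1 hlt, hp0⟩ hF
  obtain ⟨q, hq, r, hr, hqr, hrF⟩ := ih _ hdeg _ (sub_mem hp hFtm) rfl
  exact ⟨q + t, add_mem hq (totDegLE_mono (by lia) ht), r, hr, by linear_combination hqr, hrF⟩

lemma divByMonic_mem_totDegLE [Nontrivial k] {F : Biv k} (hF : F.Monic)
    (hFt : F ∈ totDegLE k F.natDegree) {m : ℕ} {p : Biv k} (hp : p ∈ totDegLE k m) :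
    p /ₘ F ∈ totDegLE k m := by
  obtain ⟨q, hq, r, -, hqr⟩ := exists_div_mod_mem_totDegLE hF hFt p hp
  exact (div_modByMonic_unique q r hF hqr).1 ▸ hq

lemma modByMonic_mem_totDegLE [Nontrivial k] {F : Biv k} (hF : F.Monic)
    (hFt : F ∈ totDegLE k F.natDegree) {m : ℕ} {p : Biv k} (hp : p ∈ totDegLE k m) :
    p %ₘ F ∈ totDegLE k m := by
  obtain ⟨q, -, r, hr, hqr⟩ := exists_div_mod_mem_totDegLE hF hFt p hp
  exact (div_modByMonic_unique q r hF hqr).2 ▸ hr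

end TotalDegree

section BezoutMonic

/-- The exponents of the monomials of `y`-degree less than `e` and total degree at most `m`. -/
def trapezoid (e m : ℕ) : Finset (ℕ × ℕ) :=
  ((Finset.range e).sigma fun j => Finset.range (m + 1 - j)).map
    (Equiv.sigmaEquivProd ℕ ℕ).toEmbedding

lemma mem_trapezoid {e m : ℕ} {c : ℕ × ℕ} :
    c ∈ trapezoid e m ↔ c.1 + c.2 ≤ m ∧ c.1 < e := by
  simp [trapezoid, Finset.mem_map_equiv]
  lia

lemma card_trapezoid_add {e m : ℕ} (h : e ≤ m + 1) (d : ℕ) :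
    (trapezoid e (m + d)).card = (trapezoid e m).card + e * d := by
  have hcard (n : ℕ) : (trapezoid e n).card = ∑ j ∈ Finset.range e, (n + 1 - j) := by
    simp [trapezoid, Finset.card_sigma]
  have hconst : e * d = ∑ _j ∈ Finset.range e, d := by simp
  rw [hcard, hcard, hconst, ← Finset.sum_add_distrib]
  refine Finset.sum_congr rfl fun j hj => ?_
  have := Finset.mem_range.1 hj
  lia

lemma mem_supportedOn_trapezoid {e m : ℕ} {p : Biv k} :
    p ∈ supportedOn k (trapezoid e m : Set (ℕ × ℕ)) ↔
      p ∈ totDegLE k m ∧ p.degree < (e : WithBot ℕ) := by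
  have hdeg : p.degree < (e : WithBot ℕ) ↔ ∀ c, occursIn p c → c.1 < e := by
    simp only [degree_lt_iff_coeff_zero, occursIn, Prod.forall, Polynomial.ext_iff, coeff_zero]
    grind
  simp only [hdeg, totDegLE, mem_supportedOn, Finset.mem_coe, mem_trapezoid, imp_and, forall_and]
  rfl

variable {K : Type*} [Field K] {F G : Biv K} {d : ℕ}

lemma exists_ne_zero_sum_smul_eq_apply {V W : Type*} [AddCommGroup V] [Module K V]
    [AddCommGroup W] [Module K W] {A : Submodule K V} {B : Submodule K W} [FiniteDimensional K A]
    [FiniteDimensional K B] {f : V →ₗ[K] W} (hAB : ∀ a ∈ A, f a ∈ B)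
    (hinj : ∀ a ∈ A, f a = 0 → a = 0) {ι : Type*} [Fintype ι] {w : ι → W} (hw : ∀ i, w i ∈ B)
    (hlt : Module.finrank K B < Module.finrank K A + Fintype.card ι) :
    ∃ c : ι → K, c ≠ 0 ∧ ∃ a ∈ A, ∑ i, c i • w i = f a := by
  let Φ : A × (ι → K) →ₗ[K] B :=
    (f.restrict hAB).coprod (-Fintype.linearCombination K fun i => (⟨w i, hw i⟩ : B))
  have hker : LinearMap.ker Φ ≠ ⊥ := LinearMap.ker_ne_bot_of_finrank_lt (by simpa using hlt)
  obtain ⟨⟨a, c⟩, hac, hne⟩ := Submodule.exists_mem_ne_zero_of_ne_bot hker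
  have hsum : ∑ i, c i • w i = f a := by
    have hsub : f a + -∑ i, c i • w i = 0 := by
      simpa [Φ, Fintype.linearCombination_apply] using
        congrArg Subtype.val (LinearMap.mem_ker.1 hac)
    exact (add_neg_eq_zero.1 hsub).symm
  refine ⟨c, ?_, a, a.2, hsum⟩
  rintro rfl
  exact hne (Prod.ext (Subtype.ext (hinj a a.2 (by simpa using hsum.symm))) rfl)

lemma exists_dvd_sum_smul_sub_mul (hF : F.Monic) (hFt : F ∈ totDegLE K F.natDegree)
    (hG : G ∈ totDegLE K d) (hFG : IsRelPrime F G) {m : ℕ} (hm : F.natDegree ≤ m + 1)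
    {ι : Type*} [Fintype ι] (hι : F.natDegree * d < Fintype.card ι) {v : ι → Biv K}
    (hv : ∀ i, v i ∈ totDegLE K (m + d)) :
    ∃ c : ι → K, c ≠ 0 ∧ ∃ b ∈ totDegLE K m, F ∣ ∑ i, c i • v i - b * G := by
  have hFe : F.degree = (F.natDegree : WithBot ℕ) := degree_eq_natDegree hF.ne_zero
  let modF : Biv K →ₗ[K] Biv K := (modByMonicHom F).restrictScalars K
  have hmodF {p : Biv K} (hp : p ∈ totDegLE K (m + d)) :
      modF p ∈ supportedOn K (trapezoid F.natDegree (m + d) : Set (ℕ × ℕ)) :=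
    mem_supportedOn_trapezoid.2
      ⟨modByMonic_mem_totDegLE hF hFt hp, hFe ▸ degree_modByMonic_lt p hF⟩
  obtain ⟨c, hc, b, hb, hcb⟩ := exists_ne_zero_sum_smul_eq_apply
    (A := supportedOn K (trapezoid F.natDegree m : Set (ℕ × ℕ)))
    (f := modF ∘ₗ LinearMap.mulRight K G) (w := fun i => modF (v i))
    (fun b hb => hmodF (mul_mem_totDegLE (mem_supportedOn_trapezoid.1 hb).1 hG))
    (fun b hb hbG => by
      have hdvd : F ∣ b * G := (modByMonic_eq_zero_iff_dvd hF).1 hbG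
      exact eq_zero_of_dvd_of_degree_lt (hFG.dvd_of_dvd_mul_right hdvd)
        (hFe ▸ (mem_supportedOn_trapezoid.1 hb).2))
    (fun i => hmodF (hv i))
    (by
      rw [finrank_supportedOn, finrank_supportedOn, card_trapezoid_add hm]
      lia)
  refine ⟨c, hc, b, (mem_supportedOn_trapezoid.1 hb).1, (modByMonic_eq_zero_iff_dvd hF).1 ?_⟩
  change modF (∑ i, c i • v i - b * G) = 0
  simpa [sub_eq_zero] using hcb

lemma finrank_quotient_span_pair_le_of_monic (hF : F.Monic) (hFt : F ∈ totDegLE K F.natDegree)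
    (hG : G ∈ totDegLE K d) (hFG : IsRelPrime F G) :
    Module.finrank K (Biv K ⧸ Ideal.span {F, G}) ≤ F.natDegree * d := by
  by_contra! hlt
  have := Module.finite_of_finrank_pos (Nat.zero_lt_of_lt hlt)
  let b := Module.finBasis K (Biv K ⧸ Ideal.span {F, G})
  choose v hv using fun i => Ideal.Quotient.mk_surjective (b i)
  obtain ⟨m, hm⟩ : ∃ m, ∀ i, totDeg (v i) ≤ m :=
    ⟨_, fun i => Finset.le_sup (f := totDeg ∘ v) (Finset.mem_univ i)⟩
  obtain ⟨c, hc, a, -, hdvd⟩ := exists_dvd_sum_smul_sub_mul hF hFt hG hFG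
    (m := F.natDegree + m) (by lia) (by simpa using hlt)
    fun i => totDegLE_mono ((hm i).trans (by lia)) (mem_totDegLE_totDeg (v i))
  have hmem : ∑ i, c i • v i ∈ Ideal.span {F, G} := by
    obtain ⟨q, hq⟩ := hdvd
    exact Ideal.mem_span_pair.2 ⟨q, a, by linear_combination -hq⟩
  refine hc (funext (Fintype.linearIndependent_iff.1 b.linearIndependent c ?_))
  simp only [← hv]
  have := Ideal.Quotient.eq_zero_iff_mem.2 hmem
  rw [map_sum] at this
  exact this

lemma exists_C_eq_mul_add_mul (hF : F.Monic) (hFt : F ∈ totDegLE K F.natDegree)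
    (hG : G ∈ totDegLE K d) (hFG : IsRelPrime F G) :
    ∃ r : K[X], r ≠ 0 ∧ ∃ q, ∃ u ∈ totDegLE K (F.natDegree * d + F.natDegree),
      C r = q * F + u * G := by
  obtain ⟨c, hc, u, hu, q, hq⟩ := exists_dvd_sum_smul_sub_mul hF hFt hG hFG
    (m := F.natDegree * d + F.natDegree) (ι := Fin (F.natDegree * d + 1)) (by lia) (by simp)
    (v := fun i => monBasis K (0, i)) fun i => monBasis_mem_supportedOn
      (show 0 + (i : ℕ) ≤ F.natDegree * d + F.natDegree + d by lia)
  let r : K[X] := ∑ i, c i • X ^ (i : ℕ)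
  have hr : r ≠ 0 := fun h0 => hc (funext fun i => by
    simpa [r, coeff_X_pow, Fin.val_inj] using congrArg (coeff · (i : ℕ)) h0)
  refine ⟨r, hr, q, u, hu, ?_⟩
  have hCr : C r = ∑ i, c i • monBasis K (0, (i : ℕ)) := by
    simp [r, monBasis_apply, ← smul_C, ← X_pow_eq_monomial]
  linear_combination hCr + hq

lemma exists_cofactors_mem_totDegLE_of_monic (hF : F.Monic) (hFt : F ∈ totDegLE K F.natDegree)
    (hG : G ∈ totDegLE K d) (hFG : IsRelPrime F G) {m : ℕ} {g : Biv K} (hg : g ∈ totDegLE K m)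
    (hgI : g ∈ Ideal.span {F, G}) :
    ∃ a ∈ totDegLE K (m + F.natDegree * d + F.natDegree + d),
      ∃ b ∈ totDegLE K (m + F.natDegree * d + F.natDegree + d), a * F + b * G = g := by
  obtain ⟨r, hr, q, u, hu, hCr⟩ := exists_C_eq_mul_add_mul hF hFt hG hFG
  obtain ⟨A, B, hAB⟩ := Ideal.mem_span_pair.1 hgI
  set b := B %ₘ F
  set a := A + (B /ₘ F) * G
  have hab : a * F + b * G = g := by
    linear_combination hAB + G * modByMonic_add_div B F
  have hmod : (u * g) %ₘ F = C r * b := by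
    refine (div_modByMonic_unique (u * a - q * b) _ hF ⟨?_, ?_⟩).2
    · linear_combination u * hab + b * hCr
    · rw [← smul_eq_C_mul]
      exact (degree_smul_le _ _).trans_lt (degree_modByMonic_lt B hF)
  have hb : b ∈ totDegLE K (F.natDegree * d + F.natDegree + m) :=
    mem_totDegLE_of_C_mul_mem hr (hmod ▸ modByMonic_mem_totDegLE hF hFt (mul_mem_totDegLE hu hg))
  have haF : F * a ∈ totDegLE K (m + F.natDegree * d + F.natDegree + d) := by
    rw [show F * a = g - b * G by linear_combination hab]
    exact sub_mem (totDegLE_mono (by lia) hg) (totDegLE_mono (by lia) (mul_mem_totDegLE hb hG))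
  refine ⟨a, ?_, b, totDegLE_mono (by lia) hb, hab⟩
  rw [← mul_divByMonic_cancel_left a hF]
  exact divByMonic_mem_totDegLE hF hFt haF

end BezoutMonic

section Shear

/-- The substitution `x ↦ x + c y`, `y ↦ y`. -/
def shearHom (c : k) : Biv k →ₐ[k] Biv k :=
  aevalAeval (C X + C (C c) * X) X

lemma shearHom_comp (c d : k) : (shearHom c).comp (shearHom d) = shearHom (c + d) := by
  ext : 2
  · simp [shearHom, add_assoc, add_mul]
  · simp [shearHom]

lemma shearHom_zero : shearHom (0 : k) = .id k (Biv k) := by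
  ext : 2 <;> simp [shearHom]

/-- The shear `x ↦ x + c y`, `y ↦ y` as an automorphism; for general `c` it puts a polynomial in
Noether position with respect to `y`. -/
def shear (c : k) : Biv k ≃ₐ[k] Biv k :=
  .ofAlgHom (shearHom c) (shearHom (-c)) (by simp [shearHom_comp, shearHom_zero])
    (by simp [shearHom_comp, shearHom_zero])

lemma shear_symm (c : k) : (shear c).symm = shear (-c) :=
  AlgEquiv.ext fun _ => rfl

lemma shear_monBasis (c : k) (m : ℕ × ℕ) :
    shear c (monBasis k m) = X ^ m.1 * (C X + C (C c) * X) ^ m.2 := by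
  rw [monBasis_apply, ← C_mul_X_pow_eq_monomial, ← X_pow_eq_monomial, mul_comm]
  simp [shear, shearHom]

lemma shear_mem_totDegLE (c : k) {m : ℕ} {p : Biv k} (hp : p ∈ totDegLE k m) :
    shear c p ∈ totDegLE k m := by
  suffices h : totDegLE k m ≤ (totDegLE k m).comap (shear c).toLinearMap from h hp
  refine Submodule.span_le.2 ?_
  rintro _ ⟨n, hn, rfl⟩
  have hXY : C X + C (C c) * X ∈ totDegLE k 1 :=
    add_mem (mem_totDegLE.2 fun a b hab => by simp [coeff_C, apply_ite (coeff · b), coeff_X]; lia)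
      (mem_totDegLE.2 fun a b hab => by simp [coeff_X, apply_ite (coeff · b), coeff_C]; lia)
  have hY : (X : Biv k) ∈ totDegLE k 1 :=
    mem_totDegLE.2 fun a b hab => by simp [coeff_X, apply_ite (coeff · b), coeff_one]; lia
  change shear c (monBasis k n) ∈ totDegLE k m
  rw [shear_monBasis]
  exact totDegLE_mono (by simpa using hn)
    (mul_mem_totDegLE (pow_mem_totDegLE hY n.1) (pow_mem_totDegLE hXY n.2))

/-- The homogeneous part of degree `e` of `p(x,y)`, dehomogenized at `y = 1`. -/
def homogeneousPart (e : ℕ) : Biv k →ₗ[k] k[X] :=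
  ∑ m ∈ Finset.HasAntidiagonal.antidiagonal e, monomial m.2 ∘ₗ (monBasis k).coord m

lemma coeff_homogeneousPart {e : ℕ} {m : ℕ × ℕ} (hm : m.1 + m.2 = e) (p : Biv k) :
    (homogeneousPart e p).coeff m.2 = (p.coeff m.1).coeff m.2 := by
  subst hm
  simp only [homogeneousPart, LinearMap.sum_apply, LinearMap.comp_apply, finsetSum_coeff,
    coeff_monomial, Module.Basis.coord_apply, monBasis_repr_apply]
  rw [Finset.sum_eq_single m] <;> grind [Finset.HasAntidiagonal.mem_antidiagonal]

lemma coeff_coeff_zero_shear (c : k) (e : ℕ) (p : Biv k) :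
    ((shear c p).coeff e).coeff 0 = (homogeneousPart e p).eval c := by
  suffices h : lcoeff k 0 ∘ₗ (lcoeff k[X] e).restrictScalars k ∘ₗ (shear c).toLinearMap =
      leval c ∘ₗ homogeneousPart e from LinearMap.congr_fun h p
  refine (monBasis k).ext fun m => ?_
  -- Setting `x = 0` turns `shear c (y ^ i * x ^ j)` into `y ^ i * (c * y) ^ j`.
  have hx0 : (shear c (monBasis k m)).map (evalRingHom 0) = monomial (m.1 + m.2) (c ^ m.2) := by
    rw [shear_monBasis, ← C_mul_X_pow_eq_monomial]
    simp only [Polynomial.map_mul, map_C, Polynomial.map_pow, Polynomial.map_add, map_X,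
      coe_evalRingHom, eval_C, eval_X, map_zero, zero_add, map_pow]
    ring
  have hcoeff : ((shear c (monBasis k m)).coeff e).coeff 0 =
      if m.1 + m.2 = e then c ^ m.2 else 0 := by
    rw [coeff_zero_eq_eval_zero, ← coe_evalRingHom, ← coeff_map, hx0, coeff_monomial]
  simp [hcoeff, homogeneousPart, Finsupp.single_apply, Finset.HasAntidiagonal.mem_antidiagonal]

lemma exists_occursIn_totDeg {F : Biv k} (hF : F ≠ 0) :
    ∃ m : ℕ × ℕ, occursIn F m ∧ m.1 + m.2 = totDeg F := by
  obtain ⟨j, hj, heq⟩ := F.support.exists_mem_eq_sup (support_nonempty.2 hF)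
    fun j => j + (F.coeff j).natDegree
  exact ⟨(j, (F.coeff j).natDegree), leadingCoeff_ne_zero.2 (mem_support_iff.1 hj), heq.symm⟩

lemma totDeg_le_iff {F : Biv k} {d : ℕ} : totDeg F ≤ d ↔ F ∈ totDegLE k d := by
  refine ⟨fun h => totDegLE_mono h (mem_totDegLE_totDeg F), fun h => ?_⟩
  by_cases hF : F = 0
  · simp [hF, totDeg]
  obtain ⟨m, hm, hdeg⟩ := exists_occursIn_totDeg hF
  exact hdeg ▸ mem_supportedOn.1 h m hm

variable {K : Type*} [Field K] [Infinite K] {F G : Biv K} {d₁ d₂ : ℕ}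

lemma exists_monic_shear_smul (hF : F ≠ 0) :
    ∃ c u : K, u ≠ 0 ∧ (shear c (u • F)).Monic ∧ (shear c (u • F)).natDegree = totDeg F := by
  obtain ⟨m, hm, hdeg⟩ := exists_occursIn_totDeg hF
  have hpart : homogeneousPart (totDeg F) F ≠ 0 := fun h0 =>
    hm (by rw [← coeff_homogeneousPart hdeg, h0, coeff_zero])
  obtain ⟨c, hc⟩ : ∃ c, (homogeneousPart (totDeg F) F).eval c ≠ 0 := by
    by_contra! h0
    exact hpart (Polynomial.funext fun c => by rw [h0 c, eval_zero])
  rw [← coeff_coeff_zero_shear] at hc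
  set u := ((shear c F).coeff (totDeg F)).coeff 0
  have hmem : shear c F ∈ totDegLE K (totDeg F) := shear_mem_totDegLE c (mem_totDegLE_totDeg F)
  have htop : (shear c (u⁻¹ • F)).coeff (totDeg F) = 1 := by
    ext b
    rcases b with - | b
    · simp [u, hc]
    · simp [mem_totDegLE.1 hmem (totDeg F) (b + 1) (by lia), coeff_one]
  have hle : (shear c (u⁻¹ • F)).natDegree ≤ totDeg F := by
    rw [map_smul]
    exact natDegree_le_of_mem_totDegLE (Submodule.smul_mem _ _ hmem)
  have hnat : (shear c (u⁻¹ • F)).natDegree = totDeg F :=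
    hle.antisymm (le_natDegree_of_ne_zero (htop ▸ one_ne_zero))
  exact ⟨c, u⁻¹, inv_ne_zero hc, by rw [Monic, leadingCoeff, hnat, htop], hnat⟩

lemma exists_shear_smul_monic_isRelPrime (hF : F ≠ 0) (hFt : F ∈ totDegLE K d₁)
    (hFG : IsRelPrime F G) :
    ∃ c u : K, (shear c (u • F)).Monic ∧
      shear c (u • F) ∈ totDegLE K (shear c (u • F)).natDegree ∧
      (shear c (u • F)).natDegree ≤ d₁ ∧ IsRelPrime (shear c (u • F)) (shear c G) ∧
      Ideal.span {shear c (u • F), shear c G} =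
        (Ideal.span {F, G}).map (shear c : Biv K →+* Biv K) := by
  obtain ⟨c, u, hu, hmonic, hdeg⟩ := exists_monic_shear_smul hF
  have hF' : F = u⁻¹ • u • F := (inv_smul_smul₀ hu F).symm
  refine ⟨c, u, hmonic, ?_, hdeg ▸ totDeg_le_iff.2 hFt, ?_, ?_⟩
  · rw [hdeg]
    exact shear_mem_totDegLE c (Submodule.smul_mem _ _ (mem_totDegLE_totDeg F))
  · refine .of_map (shear c).symm ?_
    simp only [AlgEquiv.symm_apply_apply]
    exact fun q hqF hqG => hFG (hF' ▸ dvd_smul_of_dvd _ hqF) hqG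
  · have hassoc : Ideal.span {u • F} = Ideal.span {F} := by
      rw [Algebra.smul_def]
      exact Ideal.span_singleton_mul_left_unit ((isUnit_iff_ne_zero.2 hu).map _) F
    rw [Ideal.span_insert F, ← hassoc, ← Ideal.span_insert, Ideal.map_span, Set.image_pair]
    rfl

theorem finrank_quotient_span_pair_le (hF : F ∈ totDegLE K d₁) (hG : G ∈ totDegLE K d₂)
    (hFG : IsRelPrime F G) : Module.finrank K (Biv K ⧸ Ideal.span {F, G}) ≤ d₁ * d₂ := by
  wlog hF0 : F ≠ 0 generalizing F G d₁ d₂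
  · rw [Set.pair_comm, mul_comm]
    exact this hG hF hFG.symm (hFG.ne_zero_or_ne_zero.resolve_left hF0)
  obtain ⟨c, u, hmonic, hmem, hle, hrel, hspan⟩ := exists_shear_smul_monic_isRelPrime hF0 hF hFG
  rw [(Ideal.quotientEquivAlg _ _ (shear c) hspan).toLinearEquiv.finrank_eq]
  exact (finrank_quotient_span_pair_le_of_monic hmonic hmem (shear_mem_totDegLE c hG) hrel).trans
    (Nat.mul_le_mul_right _ hle)

theorem exists_cofactors_mem_totDegLE (hF : F ∈ totDegLE K d₁) (hG : G ∈ totDegLE K d₂)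
    (hFG : IsRelPrime F G) {m : ℕ} {g : Biv K} (hg : g ∈ totDegLE K m)
    (hgI : g ∈ Ideal.span {F, G}) :
    ∃ a ∈ totDegLE K (m + d₁ * d₂ + d₁ + d₂), ∃ b ∈ totDegLE K (m + d₁ * d₂ + d₁ + d₂),
      a * F + b * G = g := by
  wlog hF0 : F ≠ 0 generalizing F G d₁ d₂
  · obtain ⟨b, hb, a, ha, hab⟩ := this hG hF hFG.symm (Set.pair_comm F G ▸ hgI)
      (hFG.ne_zero_or_ne_zero.resolve_left hF0)
    have hcomm : m + d₂ * d₁ + d₂ + d₁ = m + d₁ * d₂ + d₁ + d₂ := by ring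
    exact ⟨a, hcomm ▸ ha, b, hcomm ▸ hb, by rw [add_comm, hab]⟩
  obtain ⟨c, u, hmonic, hmem, hle, hrel, hspan⟩ := exists_shear_smul_monic_isRelPrime hF0 hF hFG
  obtain ⟨a, ha, b, hb, hab⟩ := exists_cofactors_mem_totDegLE_of_monic hmonic hmem
    (shear_mem_totDegLE c hG) hrel (shear_mem_totDegLE c hg)
    (hspan ▸ Ideal.mem_map_of_mem (shear c : Biv K →+* Biv K) hgI)
  have hmono :
      totDegLE K (m + (shear c (u • F)).natDegree * d₂ + (shear c (u • F)).natDegree + d₂) ≤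
        totDegLE K (m + d₁ * d₂ + d₁ + d₂) := totDegLE_mono (by gcongr)
  refine ⟨u • (shear c).symm a, Submodule.smul_mem _ _ (hmono ?_), (shear c).symm b, hmono ?_, ?_⟩
  · rw [shear_symm]; exact shear_mem_totDegLE _ ha
  · rw [shear_symm]; exact shear_mem_totDegLE _ hb
  · rw [smul_mul_assoc, ← mul_smul_comm]
    simpa using congrArg (shear c).symm hab

end Shear

section Coprime

variable {K : Type*} [Field K] {F G : Biv K}

lemma isUnit_of_finite_quotient_span_singleton {q : Biv K}
    [FiniteDimensional K (Biv K ⧸ Ideal.span {q})] : IsUnit q := by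
  have hannih (z : Biv K) : ∃ P : K[X], P.Monic ∧ q ∣ aeval z P := by
    obtain ⟨P, hP, hz⟩ := IsIntegral.of_finite K (Ideal.Quotient.mkₐ K (Ideal.span {q}) z)
    refine ⟨P, hP, Ideal.mem_span_singleton.1 (Ideal.Quotient.eq_zero_iff_mem.1 ?_)⟩
    rwa [← aeval_def, aeval_algHom_apply] at hz
  obtain ⟨A, hA, hqA⟩ := hannih (C X)
  obtain ⟨B, hB, hqB⟩ := hannih X
  have hCA : aeval (C X : Biv K) A = C A := by
    simpa using aeval_algHom_apply (CAlgHom (R := K) (A := K[X])) X A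
  have hCB : aeval (X : Biv K) B = B.map C := by
    rw [← coe_mapRingHom, ← AlgHom.coe_toRingHom]
    exact congrFun (congrArg _ (Polynomial.ringHom_ext' (by ext; simp) (by simp))) B
  have hdeg : q.natDegree = 0 := by
    simpa [hCA] using natDegree_le_of_dvd hqA (by simpa [hCA] using hA.ne_zero)
  obtain ⟨q₀, rfl⟩ := natDegree_eq_zero.1 hdeg
  have hq₀ : q₀ ∣ 1 := by
    simpa [hCB, hB.coeff_natDegree] using (C_dvd_iff_dvd_coeff _ _).1 hqB B.natDegree
  exact (isUnit_of_dvd_one hq₀).map C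

lemma isRelPrime_of_finite_quotient_span_pair
    [FiniteDimensional K (Biv K ⧸ Ideal.span {F, G})] : IsRelPrime F G := by
  intro q hqF hqG
  have hle : Ideal.span {F, G} ≤ Ideal.span {q} := by
    simp [Ideal.span_le, Set.pair_subset_iff, Ideal.mem_span_singleton, hqF, hqG]
  have : FiniteDimensional K (Biv K ⧸ Ideal.span {q}) :=
    .of_surjective (Ideal.Quotient.factorₐ K hle).toLinearMap (Ideal.Quotient.factor_surjective hle)
  exact isUnit_of_finite_quotient_span_singleton

end Coprime

section LeadingMonomial

lemma toLex_le_lmon {p : Biv k} {m : ℕ × ℕ} (hm : occursIn p m) : toLex m ≤ toLex (lmon p) := by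
  have hne : p.coeff m.1 ≠ 0 := fun h0 => hm (by rw [h0, coeff_zero])
  rcases (le_natDegree_of_ne_zero hne).lt_or_eq with hlt | heq
  · exact Prod.Lex.toLex_le_toLex.2 (Or.inl hlt)
  · refine Prod.Lex.toLex_le_toLex.2 (Or.inr ⟨heq, ?_⟩)
    rw [occursIn, heq] at hm
    exact le_natDegree_of_ne_zero hm

lemma occursIn_lmon {p : Biv k} (hp : p ≠ 0) : occursIn p (lmon p) :=
  leadingCoeff_ne_zero.2 (leadingCoeff_ne_zero.2 hp)

/-- The standard monomials of a family `g`: those divisible by no leading monomial of `g`. -/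
def stdMon {ι : Type*} (g : ι → Biv k) : Set (ℕ × ℕ) :=
  {m | ∀ l, ¬ monDvd (lmon (g l)) m}

end LeadingMonomial

namespace IsReducedGB

variable {s : ℕ} {g : Fin (s + 1) → Biv k} {I : Ideal (Biv k)}

lemma mem (hg : IsReducedGB g I) (j : Fin (s + 1)) : g j ∈ I :=
  (hg.1.1 (g j) (List.mem_ofFn.2 ⟨j, rfl⟩)).2

lemma exists_monDvd_lmon (hg : IsReducedGB g I) {p : Biv k} (hp : p ∈ I) (hp0 : p ≠ 0) :
    ∃ l, monDvd (lmon (g l)) (lmon p) := by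
  obtain ⟨_, hmem, hdvd⟩ := hg.1.2 p hp hp0
  obtain ⟨l, rfl⟩ := List.mem_ofFn.1 hmem
  exact ⟨l, hdvd⟩

lemma eq_zero_of_mem_supportedOn (hg : IsReducedGB g I) {p : Biv k} (hpI : p ∈ I)
    (hp : p ∈ supportedOn k (stdMon g)) : p = 0 := by
  by_contra hp0
  obtain ⟨l, hl⟩ := hg.exists_monDvd_lmon hpI hp0
  exact mem_supportedOn.1 hp _ (occursIn_lmon hp0) l hl

lemma eq_and_eq_lmon_of_monDvd (hg : IsReducedGB g I) {j l : Fin (s + 1)} {m n : ℕ × ℕ}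
    (hm : occursIn (g j) m) (hnm : n ≤ m) (hl : monDvd (lmon (g l)) n) :
    n = m ∧ m = lmon (g j) := by
  obtain rfl : j = l := by
    by_contra hjl
    exact hg.2.2.1 j l hjl m hm ⟨hl.1.trans hnm.1, hl.2.trans hnm.2⟩
  have hln : toLex (lmon (g j)) ≤ toLex n := Prod.Lex.toLex_mono hl
  have hnm : toLex n ≤ toLex m := Prod.Lex.toLex_mono hnm
  have hml := toLex_le_lmon hm
  exact ⟨toLex.injective (hnm.antisymm (hml.trans hln)),
    toLex.injective (hml.antisymm (hln.trans hnm))⟩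

lemma coeff_coeff_eq_ite (hg : IsReducedGB g I) {j : Fin (s + 1)} {m : ℕ × ℕ}
    (hm : m ∉ stdMon g) : ((g j).coeff m.1).coeff m.2 = if m = lmon (g j) then 1 else 0 := by
  split_ifs with h
  · subst h
    exact hg.2.1 j
  · by_contra hne
    exact hm fun l hl => h (hg.eq_and_eq_lmon_of_monDvd hne le_rfl hl).2

lemma mem_totDegLE_finrank {K : Type*} [Field K] {g : Fin (s + 1) → Biv K} {I : Ideal (Biv K)}
    [FiniteDimensional K (Biv K ⧸ I)] (hg : IsReducedGB g I) (j : Fin (s + 1)) :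
    g j ∈ totDegLE K (Module.finrank K (Biv K ⧸ I)) := by
  refine mem_supportedOn.2 fun m hm => ?_
  -- The `(m.1 + 1) * (m.2 + 1) - 1` proper divisors of `m` are independent modulo `I`.
  have hstd : (Finset.Iio m : Set (ℕ × ℕ)) ⊆ stdMon g := fun n hn l hl => by
    have hlt : n < m := by simpa using hn
    exact hlt.ne (hg.eq_and_eq_lmon_of_monDvd hm hlt.le hl).1
  have hinj : Function.Injective ((Ideal.Quotient.mkₐ K I).toLinearMap.domRestrict
      (supportedOn K (Finset.Iio m : Set (ℕ × ℕ)))) := by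
    rw [LinearMap.injective_domRestrict_iff, Submodule.disjoint_def]
    exact fun p hp hpI => hg.eq_zero_of_mem_supportedOn (Ideal.Quotient.eq_zero_iff_mem.1 hpI)
      (supportedOn_mono hstd hp)
  have hcard : (Finset.Iio m).card + 1 = (m.1 + 1) * (m.2 + 1) := by
    rw [Finset.card_Iio_eq_card_Iic_sub_one]
    simpa [Finset.card_Iic_prod] using Nat.sub_add_cancel (Nat.mul_pos m.1.succ_pos m.2.succ_pos)
  have hle := LinearMap.finrank_le_finrank_of_injective hinj
  rw [finrank_supportedOn] at hle
  change m.1 + m.2 ≤ _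
  nlinarith

end IsReducedGB

section NormalForm

lemma monBasis_sub_mul_mem_supportedOn {p : Biv k} (hp : lexMonic p) (e : ℕ × ℕ) :
    monBasis k (e + lmon p) - monBasis k e * p ∈
      supportedOn k {m | toLex m < toLex (e + lmon p)} := by
  have hcoeff (m : ℕ × ℕ) : ((monBasis k (e + lmon p)).coeff m.1).coeff m.2 =
      if e + lmon p = m then 1 else 0 := by
    rw [← monBasis_repr_apply, Module.Basis.repr_self, Finsupp.single_apply]
  refine mem_supportedOn.2 fun m hm => ?_
  rw [occursIn, coeff_sub, coeff_sub, hcoeff, coeff_coeff_monBasis_mul] at hm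
  have hne : e + lmon p ≠ m := by
    rintro rfl
    have hlead : (p.coeff (lmon p).1).coeff (lmon p).2 = 1 := hp
    simp [hlead] at hm
  rw [if_neg hne, zero_sub, neg_ne_zero, ite_ne_right_iff] at hm
  obtain ⟨hem, hm⟩ := hm
  have hle : toLex (m - e) ≤ toLex (lmon p) := toLex_le_lmon hm
  refine lt_of_le_of_ne ?_ fun h => hne (toLex.injective h).symm
  rw [Prod.Lex.toLex_le_toLex] at hle ⊢
  simp only [Prod.fst_sub, Prod.snd_sub, Prod.fst_add, Prod.snd_add, Prod.le_def] at hle hem ⊢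
  lia

variable {ι : Type*} {g : ι → Biv k}

lemma monBasis_mem_supportedOn_stdMon_sup_span (hg : ∀ l, lexMonic (g l)) (n : ℕ × ℕ) :
    monBasis k n ∈ supportedOn k {m ∈ stdMon g | toLex m ≤ toLex n} ⊔
      (Ideal.span (Set.range g)).restrictScalars k := by
  induction hn : toLex n using WellFoundedLT.induction generalizing n with
  | ind N ih =>
  subst hn
  by_cases hstd : n ∈ stdMon g
  · exact Submodule.mem_sup_left (monBasis_mem_supportedOn ⟨hstd, le_rfl⟩)
  simp only [stdMon, Set.mem_ofPred_eq, not_forall, not_not] at hstd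
  obtain ⟨l, hl⟩ := hstd
  obtain ⟨e, rfl⟩ : ∃ e, n = e + lmon (g l) := ⟨n - lmon (g l), (tsub_add_cancel_of_le hl).symm⟩
  rw [← sub_add_cancel (monBasis k _) (monBasis k e * g l)]
  refine add_mem ?_ (Submodule.mem_sup_right (Ideal.mul_mem_left _ _ (Ideal.subset_span ⟨l, rfl⟩)))
  refine Submodule.span_le.2 ?_ (monBasis_sub_mul_mem_supportedOn (hg l) e)
  rintro _ ⟨m, hm, rfl⟩
  have hmono : supportedOn k {m' ∈ stdMon g | toLex m' ≤ toLex m} ≤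
      supportedOn k {m' ∈ stdMon g | toLex m' ≤ toLex (e + lmon (g l))} :=
    supportedOn_mono fun m' hm' => ⟨hm'.1, hm'.2.trans hm.le⟩
  exact sup_le_sup_right hmono _ (ih _ hm m rfl)

variable {J : Ideal (Biv k)}

lemma exists_normalForm_monBasis (hg : ∀ l, lexMonic (g l)) (hgJ : ∀ l, g l ∈ J)
    (hJ : ∀ p ∈ J, p ∈ supportedOn k (stdMon g) → p = 0) (n : ℕ × ℕ) :
    ∃ r ∈ supportedOn k {m ∈ stdMon g | toLex m ≤ toLex n},
      monBasis k n - r ∈ J ∧ (n ∈ stdMon g → r = monBasis k n) := by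
  obtain ⟨r, hr, q, hq, hrq⟩ :=
    Submodule.mem_sup.1 (monBasis_mem_supportedOn_stdMon_sup_span hg n)
  have hqJ : monBasis k n - r ∈ J := by
    rw [← hrq, add_sub_cancel_left]
    exact Ideal.span_le.2 (Set.range_subset_iff.2 hgJ) hq
  refine ⟨r, hr, hqJ, fun hn => (sub_eq_zero.1 (hJ _ hqJ ?_)).symm⟩
  exact sub_mem (monBasis_mem_supportedOn hn) (supportedOn_mono (fun _ hm => hm.1) hr)

end NormalForm

section Specialization

/-- The coefficientwise map `R[x,y] → k[x,y]` induced by `φ : R → k`. -/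
def bivMap {R : Type*} [CommRing R] (φ : R →+* k) : Biv R →+* Biv k :=
  mapRingHom (mapRingHom φ)

variable {R : Type*} [CommRing R] {φ : R →+* k}

lemma coeff_coeff_bivMap (p : Biv R) (a b : ℕ) :
    ((bivMap φ p).coeff a).coeff b = φ ((p.coeff a).coeff b) := by
  simp [bivMap]

lemma bivMap_monBasis (m : ℕ × ℕ) : bivMap φ (monBasis R m) = monBasis k m := by
  simp [bivMap, monBasis_apply]

lemma bivMap_C_C (c : R) : bivMap φ (C (C c)) = C (C (φ c)) := by
  simp [bivMap]

lemma occursIn_of_bivMap {p : Biv R} {m : ℕ × ℕ} (h : occursIn (bivMap φ p) m) : occursIn p m :=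
  fun h0 => h (by rw [coeff_coeff_bivMap, h0, map_zero])

lemma bivMap_mem_supportedOn {p : Biv R} {S : Set (ℕ × ℕ)} (hp : p ∈ supportedOn R S) :
    bivMap φ p ∈ supportedOn k S :=
  mem_supportedOn.2 fun m hm => mem_supportedOn.1 hp m (occursIn_of_bivMap hm)

lemma bivMap_smul (c : R) (p : Biv R) : bivMap φ (c • p) = φ c • bivMap φ p := by
  ext a b
  simp [coeff_coeff_bivMap]

section Nontrivial

variable [Nontrivial k] {p : Biv R}

lemma natDegree_bivMap (hp : lexMonic p) : (bivMap φ p).natDegree = p.natDegree :=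
  natDegree_map_of_leadingCoeff_ne_zero _ (hp.map φ).ne_zero

lemma leadingCoeff_bivMap (hp : lexMonic p) :
    (bivMap φ p).leadingCoeff = p.leadingCoeff.map φ :=
  leadingCoeff_map_of_leadingCoeff_ne_zero _ (hp.map φ).ne_zero

lemma lexMonic_bivMap (hp : lexMonic p) : lexMonic (bivMap φ p) := by
  rw [lexMonic, leadingCoeff_bivMap hp]
  exact hp.map φ

lemma lmon_bivMap (hp : lexMonic p) : lmon (bivMap φ p) = lmon p := by
  rw [lmon, lmon, natDegree_bivMap hp, leadingCoeff_bivMap hp, hp.natDegree_map]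

end Nontrivial

variable {ι : Type*} {g : ι → Biv R} {J : Ideal (Biv R)}

/-- Since `g` is lex-monic, reduction modulo `g` is defined over `R`, hence specializes along
`φ`. -/
lemma exists_normalForm_linearMap (φ : R →+* k) (hg : ∀ l, lexMonic (g l)) (hgJ : ∀ l, g l ∈ J)
    (hJ : ∀ p ∈ J, p ∈ supportedOn R (stdMon g) → p = 0) :
    ∃ nf : Biv k →ₗ[k] Biv k, (∀ q ∈ J, nf (bivMap φ q) = 0) ∧
      (∀ n ∈ stdMon g, nf (monBasis k n) = monBasis k n) ∧
      ∀ n, nf (monBasis k n) ∈ supportedOn k {m | toLex m ≤ toLex n} := by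
  choose r hr hrJ hrstd using exists_normalForm_monBasis hg hgJ hJ
  let nfR : Biv R →ₗ[R] Biv R := (monBasis R).constr R r
  let nf : Biv k →ₗ[k] Biv k := (monBasis k).constr k (bivMap φ ∘ r)
  have hnf (n : ℕ × ℕ) : nf (monBasis k n) = bivMap φ (r n) := Module.Basis.constr_basis ..
  have hcongr (q : Biv R) : q - nfR q ∈ J := by
    have hmk : (Ideal.Quotient.mkₐ R J).toLinearMap ∘ₗ nfR = (Ideal.Quotient.mkₐ R J).toLinearMap :=
      (monBasis R).ext fun n => by
        simpa [nfR, eq_comm (a := Ideal.Quotient.mk J (r n))] using Ideal.Quotient.eq.2 (hrJ n)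
    exact Ideal.Quotient.eq.1 (LinearMap.congr_fun hmk q).symm
  have hstd (q : Biv R) : nfR q ∈ supportedOn R (stdMon g) := by
    have hrange : LinearMap.range nfR ≤ supportedOn R (stdMon g) := by
      rw [Module.Basis.constr_range, Submodule.span_le]
      rintro _ ⟨n, rfl⟩
      exact supportedOn_mono (fun _ hm => hm.1) (hr n)
    exact hrange ⟨q, rfl⟩
  have hcomm (q : Biv R) : nf (bivMap φ q) = bivMap φ (nfR q) := by
    induction (monBasis R).mem_span q using Submodule.span_induction with
    | mem _ h => obtain ⟨n, rfl⟩ := h; simp [nfR, bivMap_monBasis, hnf]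
    | zero => simp
    | add _ _ _ _ h₁ h₂ => simp [h₁, h₂]
    | smul c _ _ h => simp [bivMap_smul, h]
  refine ⟨nf, fun q hq => ?_, fun n hn => ?_, fun n => ?_⟩
  · have hmem : nfR q ∈ J := sub_sub_cancel q (nfR q) ▸ sub_mem hq (hcongr q)
    rw [hcomm, hJ _ hmem (hstd q), map_zero]
  · rw [hnf, hrstd n hn, bivMap_monBasis]
  · rw [hnf]
    exact supportedOn_mono (fun _ hm => hm.2) (bivMap_mem_supportedOn (hr n))

lemma exists_monDvd_lmon_of_mem_map (hg : ∀ l, lexMonic (g l)) (hgJ : ∀ l, g l ∈ J)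
    (hJ : ∀ p ∈ J, p ∈ supportedOn R (stdMon g) → p = 0) (hφ : Function.Surjective φ)
    {p : Biv k} (hp : p ∈ J.map (bivMap φ)) (hp0 : p ≠ 0) :
    ∃ l, monDvd (lmon (g l)) (lmon p) := by
  obtain ⟨nf, hnfJ, hnfstd, hnfle⟩ := exists_normalForm_linearMap φ hg hgJ hJ
  obtain ⟨q, hq, rfl⟩ := (Ideal.mem_map_iff_of_surjective _
    (map_surjective _ (map_surjective _ hφ))).1 hp
  by_contra! hstd
  set n := lmon (bivMap φ q)
  have hcoord : Set.EqOn ((monBasis k).coord n ∘ₗ nf) ((monBasis k).coord n)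
      (monBasis k '' {m | toLex m ≤ toLex n}) := by
    rintro _ ⟨m, hm, rfl⟩
    obtain rfl | hne := eq_or_ne m n
    · simp [hnfstd n hstd]
    have hnot : ¬ occursIn (nf (monBasis k m)) n := fun h =>
      hne (toLex.injective (le_antisymm hm (mem_supportedOn.1 (hnfle m) n h)))
    simpa [hne, monBasis_repr_apply, occursIn] using hnot
  have hlead := LinearMap.eqOn_span hcoord (mem_supportedOn.2 fun m => toLex_le_lmon)
  simp only [LinearMap.comp_apply, hnfJ q hq, map_zero, Module.Basis.coord_apply,
    monBasis_repr_apply] at hlead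
  exact occursIn_lmon hp0 hlead.symm

theorem isReducedGB_bivMap {S : Type*} [CommRing S] [Nontrivial S] [Nontrivial k] {s : ℕ}
    {g : Fin (s + 1) → Biv R} {ψ : R →+* S} (hψ : Function.Injective ψ) (hφ : Function.Surjective φ)
    (hg : ∀ l, lexMonic (g l)) (hgJ : ∀ l, g l ∈ J)
    (hgψ : IsReducedGB (fun l => bivMap ψ (g l)) (J.map (bivMap ψ))) :
    IsReducedGB (fun l => bivMap φ (g l)) (J.map (bivMap φ)) := by
  have hinj : Function.Injective (bivMap ψ) := map_injective _ (map_injective _ hψ)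
  have hstd : stdMon (fun l => bivMap ψ (g l)) = stdMon g := by
    simp only [stdMon, lmon_bivMap (hg _)]
  have hJ (p : Biv R) (hp : p ∈ J) (hps : p ∈ supportedOn R (stdMon g)) : p = 0 := by
    refine (map_eq_zero_iff _ hinj).1
      (hgψ.eq_zero_of_mem_supportedOn (Ideal.mem_map_of_mem _ hp) ?_)
    exact hstd ▸ bivMap_mem_supportedOn hps
  have hoccurs {p : Biv R} {m : ℕ × ℕ} (h : occursIn (bivMap φ p) m) : occursIn (bivMap ψ p) m := by
    rw [occursIn, coeff_coeff_bivMap]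
    exact (map_ne_zero_iff _ hψ).2 (occursIn_of_bivMap h)
  obtain ⟨-, -, hred, hord⟩ := hgψ
  simp only [lmon_bivMap (hg _)] at hred hord
  simp only [IsReducedGB, IsGB, List.forall_mem_ofFn_iff, lmon_bivMap (hg _)]
  refine ⟨⟨fun l => ⟨?_, Ideal.mem_map_of_mem _ (hgJ l)⟩, fun p hp hp0 => ?_⟩,
    fun l => lexMonic_bivMap (hg l), fun j l hjl m hm => hred j l hjl m (hoccurs hm), hord⟩
  · exact leadingCoeff_ne_zero.1 (lexMonic_bivMap (hg l)).ne_zero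
  · obtain ⟨l, hl⟩ := exists_monDvd_lmon_of_mem_map hg hgJ hJ hφ hp hp0
    exact ⟨_, List.mem_ofFn.2 ⟨l, rfl⟩, by rwa [lmon_bivMap (hg l)]⟩

end Specialization

section GoodPrimes

lemma bivMap_bivMap {R S : Type*} [CommRing R] [CommRing S] (ψ : R →+* S) (φ : S →+* k)
    (p : Biv R) : bivMap φ (bivMap ψ p) = bivMap (φ.comp ψ) p := by
  simp [bivMap, Polynomial.map_map, mapRingHom_comp]

lemma map_bivMap_map_bivMap {R S : Type*} [CommRing R] [CommRing S] (ψ : R →+* S) (φ : S →+* k)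
    (J : Ideal (Biv R)) : (J.map (bivMap ψ)).map (bivMap φ) = J.map (bivMap (φ.comp ψ)) := by
  rw [Ideal.map_map]
  exact congrArg (J.map ·) (RingHom.ext (bivMap_bivMap ψ φ))

lemma lexMonic_of_bivMap {R : Type*} [CommRing R] {φ : R →+* k} (hφ : Function.Injective φ)
    {p : Biv R} (hp : lexMonic (bivMap φ p)) : lexMonic p := by
  rw [lexMonic, bivMap, coe_mapRingHom,
    leadingCoeff_map_of_injective (map_injective _ hφ)] at hp
  exact monic_of_injective hφ hp

lemma C_C_inv_mul_bivMap_comp {R S F : Type*} [CommRing R] [CommRing S] [Field F] {ι : R →+* S}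
    (χ : S →+* F) {b : R} {u : Sˣ} (hu : ↑u = ι b) (p : Biv R) :
    C (C (χ (ι b))⁻¹) * bivMap (χ.comp ι) p = bivMap χ (C (C (↑u⁻¹ : S)) * bivMap ι p) := by
  rw [map_mul, bivMap_C_C, bivMap_bivMap, ← hu, map_units_inv]

theorem isReducedGB_C_C_inv_mul_bivMap_comp {R S K F : Type*} [CommRing R] [CommRing S] [Field K]
    [Field F] {ι : R →+* S} {φ : S →+* K} {ψ : S →+* F} (hφ : Function.Injective φ)
    (hψ : Function.Surjective ψ) {b : R} (hb : IsUnit (ι b)) {s : ℕ} {g : Fin (s + 1) → Biv R}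
    {J : Ideal (Biv R)} (hgJ : ∀ j, g j ∈ J)
    (hg : IsReducedGB (fun j => C (C (φ (ι b))⁻¹) * bivMap (φ.comp ι) (g j))
      (J.map (bivMap (φ.comp ι)))) :
    IsReducedGB (fun j => C (C (ψ (ι b))⁻¹) * bivMap (ψ.comp ι) (g j))
      (J.map (bivMap (ψ.comp ι))) := by
  obtain ⟨u, hu⟩ := hb
  simp only [C_C_inv_mul_bivMap_comp _ hu, ← map_bivMap_map_bivMap] at hg ⊢
  refine isReducedGB_bivMap hφ hψ (fun j => lexMonic_of_bivMap hφ (hg.2.1 j)) (fun j => ?_) hg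
  exact Ideal.mul_mem_left _ _ (Ideal.mem_map_of_mem _ (hgJ j))

theorem isReducedGB_toP {β : ℤ} (hβ : β ≠ 0) {p : ℕ} [Fact p.Prime] (hp : ¬ (p : ℤ) ∣ β) {s : ℕ}
    {g : Fin (s + 1) → Biv ℚ} {gz : Fin (s + 1) → Biv ℤ} {J : Ideal (Biv ℤ)}
    (hgz : ∀ j, toQ (gz j) = C (C (β : ℚ)) * g j) (hgzJ : ∀ j, gz j ∈ J)
    (hg : IsReducedGB g (J.map toQ)) :
    IsReducedGB (fun j => C (C (β : ZMod p)⁻¹) * toP p (gz j)) (J.map (toP p)) := by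
  have hβℚ : (β : ℚ) ≠ 0 := Int.cast_ne_zero.2 hβ
  have hβp : (β : ZMod p) ≠ 0 := mt (ZMod.intCast_zmod_eq_zero_iff_dvd β p).1 hp
  let S := Localization.Away β
  let φ : S →+* ℚ := IsLocalization.Away.lift (g := Int.castRingHom ℚ) β (by simpa using hβℚ)
  let ψ : S →+* ZMod p :=
    IsLocalization.Away.lift (g := Int.castRingHom (ZMod p)) β (by simpa using hβp)
  have hφ : Function.Injective φ := by
    refine (IsLocalization.lift_injective_iff _).2 fun a b => ?_
    rw [(IsLocalization.injective S (powers_le_nonZeroDivisors_of_noZeroDivisors hβ)).eq_iff]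
    simp
  have hgeq : g = fun j => C (C (β : ℚ)⁻¹) * toQ (gz j) := by
    funext j
    rw [hgz, ← mul_assoc, ← C_mul, ← C_mul, inv_mul_cancel₀ hβℚ, C_1, C_1, one_mul]
  have hmain := isReducedGB_C_C_inv_mul_bivMap_comp hφ (ZMod.ringHom_surjective ψ)
    (IsLocalization.Away.algebraMap_isUnit β : IsUnit (algebraMap ℤ S β)) hgzJ
  have hφι : φ.comp (algebraMap ℤ S) = Int.castRingHom ℚ := RingHom.ext_int _ _
  have hψι : ψ.comp (algebraMap ℤ S) = Int.castRingHom (ZMod p) := RingHom.ext_int _ _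
  simp only [hφι, hψι, ← RingHom.comp_apply] at hmain
  exact hmain (hgeq ▸ hg)

end GoodPrimes

section Cramer

open Matrix

lemma exists_det_submatrix_ne_zero {K ρ κ : Type*} [Field K] [Fintype ρ] [DecidableEq ρ]
    {A : Matrix ρ κ K} (hA : LinearIndependent K A.row) :
    ∃ b : ρ ↪ κ, (A.submatrix id b).det ≠ 0 := by
  have hspan : Submodule.span K (Set.range A.col) = ⊤ := by
    by_contra hne
    obtain ⟨φ, hφ0, hφ⟩ := Submodule.exists_le_ker_of_lt_top _ (lt_top_iff_ne_top.2 hne)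
    refine hφ0 (LinearMap.pi_ext' fun i => LinearMap.ext_ring ?_)
    refine Fintype.linearIndependent_iff.1 hA (fun i => φ (Pi.single i 1)) (funext fun c => ?_) i
    have hcol : φ (A.col c) = 0 := hφ (Submodule.subset_span ⟨c, rfl⟩)
    rw [pi_eq_sum_univ' (A.col c), map_sum] at hcol
    simpa [mul_comm] using hcol
  obtain ⟨σ, a, ha, hspana, hli⟩ := exists_linearIndependent' K A.col
  let colBasis := Module.Basis.mk hli (hspana.trans hspan).ge
  let e : ρ ≃ σ := (Pi.basisFun K ρ).indexEquiv colBasis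
  refine ⟨e.toEmbedding.trans ⟨a, ha⟩, ?_⟩
  rw [← isUnit_iff_ne_zero, ← isUnit_iff_isUnit_det, ← linearIndependent_cols_iff_isUnit]
  exact hli.comp e e.injective

variable {ρ : Type*} [Fintype ρ]

section DecidableEq

variable [DecidableEq ρ]

lemma abs_det_le_factorial_mul_pow {A : Matrix ρ ρ ℤ} {H : ℝ}
    (hA : ∀ i j, ((|A i j| : ℤ) : ℝ) ≤ H) :
    ((|A.det| : ℤ) : ℝ) ≤ (Fintype.card ρ).factorial * H ^ Fintype.card ρ := by
  have hcast := det_le (A := A.map (Int.castRingHom ℝ)) (abv := AbsoluteValue.abs) (x := H)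
    fun i j => by simpa using hA i j
  rw [← RingHom.mapMatrix_apply, ← RingHom.map_det] at hcast
  simpa using hcast

lemma map_vecMul_adjugate {R S : Type*} [CommRing R] [CommRing S] (φ : R →+* S)
    {B : Matrix ρ ρ R} {e : ρ → R} {x : ρ → S} (hx : x ᵥ* B.map φ = φ ∘ e) :
    φ ∘ (e ᵥ* B.adjugate) = φ B.det • x := by
  have hcomp : φ ∘ (e ᵥ* B.adjugate) = (φ ∘ e) ᵥ* (B.map φ).adjugate := by
    rw [← RingHom.mapMatrix_apply, ← RingHom.map_adjugate]
    exact funext (RingHom.map_vecMul φ _ _)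
  rw [hcomp, ← hx, vecMul_vecMul, mul_adjugate, vecMul_smul, vecMul_one, RingHom.map_det,
    RingHom.mapMatrix_apply]

lemma single_vecMul_adjugate_dotProduct {R : Type*} [CommRing R] (B : Matrix ρ ρ R) (l : ρ)
    (v : ρ → R) : (Pi.single l 1 ᵥ* B.adjugate) ⬝ᵥ v = (B.updateCol l v).det := by
  rw [← cramer_apply, cramer_eq_adjugate_mulVec, ← dotProduct_mulVec, single_one_dotProduct]

end DecidableEq

variable {κ : Type*} [DecidableEq κ] {M : Matrix ρ κ ℤ} {S : Set κ} {H : ℝ}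

theorem exists_common_denominator_vecMul_eq_single
    (hM : ∀ i c, ((|M i c| : ℤ) : ℝ) ≤ H) (hH : 0 ≤ H)
    (hli : LinearIndependent ℚ fun i (c : S) => (M i c : ℚ)) :
    ∃ β : ℤ, β ≠ 0 ∧ ((|β| : ℤ) : ℝ) ≤ (Fintype.card ρ).factorial * H ^ Fintype.card ρ ∧
      ∀ (x : ρ → ℚ) (c₀ : κ),
        (∀ c ∈ S, (x ᵥ* M.map (Int.cast : ℤ → ℚ)) c = if c = c₀ then 1 else 0) →
        ∃ w : ρ → ℤ, (∀ i, (w i : ℚ) = β * x i) ∧ ∀ c,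
          ((|(w ᵥ* M) c| : ℤ) : ℝ) ≤ (Fintype.card ρ).factorial * H ^ Fintype.card ρ := by
  classical
  obtain ⟨b, hb⟩ := exists_det_submatrix_ne_zero (A := fun i (c : S) => (M i c : ℚ)) hli
  let B : Matrix ρ ρ ℤ := M.submatrix id (Subtype.val ∘ b)
  have hdet : (B.det : ℚ) ≠ 0 := by rwa [Int.cast_det]
  refine ⟨B.det, Int.cast_ne_zero.1 hdet, abs_det_le_factorial_mul_pow fun i j => hM _ _,
    fun x c₀ hx => ?_⟩
  let e : ρ → ℤ := fun j => if (b j : κ) = c₀ then 1 else 0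
  have hxB : x ᵥ* B.map (Int.castRingHom ℚ) = Int.castRingHom ℚ ∘ e := by
    funext j
    simpa [e] using show (x ᵥ* B.map (Int.cast : ℤ → ℚ)) j = _ from hx (b j) (b j).2
  refine ⟨e ᵥ* B.adjugate, congrFun (map_vecMul_adjugate _ hxB), fun c => ?_⟩
  by_cases hc₀ : ∃ l, (b l : κ) = c₀
  · obtain ⟨l, hl⟩ := hc₀
    have he : e = Pi.single l 1 := by
      funext j
      simp [e, ← hl, Pi.single_apply, Subtype.val_inj]
    have hw : ((e ᵥ* B.adjugate) ᵥ* M) c = (B.updateCol l (M.col c)).det := by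
      rw [he, ← single_vecMul_adjugate_dotProduct]
      rfl
    rw [hw]
    refine abs_det_le_factorial_mul_pow fun i j => ?_
    rw [updateCol_apply]
    split_ifs <;> exact hM _ _
  · have he : e = 0 := funext fun j => if_neg fun h => hc₀ ⟨j, h⟩
    simp only [he, zero_vecMul, Pi.zero_apply, abs_zero, Int.cast_zero]
    positivity

end Cramer

section IntegralMultiple

lemma coeff_coeff_toQ (p : Biv ℤ) (a b : ℕ) :
    ((toQ p).coeff a).coeff b = ((p.coeff a).coeff b : ℚ) :=
  coeff_coeff_bivMap p a b

namespace IsReducedGB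

lemma linearIndependent_coeff_compl_stdMon {s : ℕ} {g : Fin (s + 1) → Biv k} {I : Ideal (Biv k)}
    (hg : IsReducedGB g I) {σ : Type*} {v : σ → Biv k} (hv : LinearIndependent k v)
    (hvI : ∀ i, v i ∈ I) :
    LinearIndependent k fun i (c : ↥(stdMon g)ᶜ) => ((v i).coeff c.1.1).coeff c.1.2 := by
  let coeffs : Biv k →ₗ[k] ↥(stdMon g)ᶜ → k := LinearMap.pi fun c => (monBasis k).coord c
  have hcoeffs (p : Biv k) : coeffs p = fun c => (p.coeff c.1.1).coeff c.1.2 :=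
    funext fun c => monBasis_repr_apply p c
  have hdisj : Disjoint (Submodule.span k (Set.range v)) (LinearMap.ker coeffs) := by
    refine Submodule.disjoint_def.2 fun p hp hker => hg.eq_zero_of_mem_supportedOn ?_ ?_
    · have hspan : Submodule.span k (Set.range v) ≤ I.restrictScalars k :=
        Submodule.span_le.2 (Set.range_subset_iff.2 hvI)
      exact hspan hp
    · rw [LinearMap.mem_ker, hcoeffs] at hker
      exact mem_supportedOn.2 fun m hm => by_contra fun hstd => hm (congrFun hker ⟨m, hstd⟩)
  simpa only [Function.comp_def, hcoeffs] using hv.map hdisj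

variable {s : ℕ} {g : Fin (s + 1) → Biv ℚ} {I : Ideal (Biv ℚ)}

open Matrix in
theorem exists_integral_multiple_of_linearIndependent (hg : IsReducedGB g I) {σ : Type*}
    [Fintype σ] {u : σ → Biv ℤ} {H : ℝ} (hH : 0 ≤ H)
    (hu : ∀ i a b, ((|((u i).coeff a).coeff b| : ℤ) : ℝ) ≤ H) (huI : ∀ i, toQ (u i) ∈ I)
    (hli : LinearIndependent ℚ fun i => toQ (u i))
    (hgu : ∀ j, g j ∈ Submodule.span ℚ (Set.range fun i => toQ (u i))) :
    ∃ β : ℤ, β ≠ 0 ∧ ((|β| : ℤ) : ℝ) ≤ (Fintype.card σ).factorial * H ^ Fintype.card σ ∧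
      ∀ j, ∃ z ∈ Submodule.span ℤ (Set.range u), toQ z = C (C (β : ℚ)) * g j ∧
        ∀ a b, ((|(z.coeff a).coeff b| : ℤ) : ℝ) ≤
          (Fintype.card σ).factorial * H ^ Fintype.card σ := by
  classical
  let M : Matrix σ (ℕ × ℕ) ℤ := .of fun i c => ((u i).coeff c.1).coeff c.2
  have hM := hg.linearIndependent_coeff_compl_stdMon hli huI
  simp only [coeff_coeff_toQ] at hM
  obtain ⟨β, hβ0, hβ, hden⟩ :=
    exists_common_denominator_vecMul_eq_single (M := M) (fun i c => hu i _ _) hH hM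
  refine ⟨β, hβ0, hβ, fun j => ?_⟩
  obtain ⟨x, hx⟩ := (Submodule.mem_span_range_iff_exists_fun ℚ).1 (hgu j)
  have hxM (c : ℕ × ℕ) : (x ᵥ* M.map (Int.cast : ℤ → ℚ)) c = ((g j).coeff c.1).coeff c.2 := by
    simp [← hx, vecMul, dotProduct, M, finsetSum_coeff, coeff_coeff_toQ]
  obtain ⟨w, hw, hwle⟩ := hden x (lmon (g j)) fun c hc => by
    rw [hxM, hg.coeff_coeff_eq_ite hc]
  refine ⟨∑ i, w i • u i, ?_, ?_, fun a b => ?_⟩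
  · exact Submodule.sum_mem _ fun i _ => Submodule.smul_mem _ _ (Submodule.subset_span ⟨i, rfl⟩)
  · calc toQ (∑ i, w i • u i) = ∑ i, (w i : ℚ) • toQ (u i) := by simp [Int.cast_smul_eq_zsmul]
      _ = (β : ℚ) • g j := by simp only [hw, mul_smul, ← Finset.smul_sum, hx]
      _ = C (C (β : ℚ)) * g j := Algebra.smul_def ..
  · have hz : ((∑ i, w i • u i).coeff a).coeff b = (w ᵥ* M) (a, b) := by
      simp [vecMul, dotProduct, M, finsetSum_coeff]
    exact hz ▸ hwle (a, b)

theorem exists_integral_multiple (hg : IsReducedGB g I) {ρ : Type*} [Fintype ρ] {u : ρ → Biv ℤ}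
    {H : ℝ} (hH : 1 ≤ H) (hu : ∀ i a b, ((|((u i).coeff a).coeff b| : ℤ) : ℝ) ≤ H)
    (huI : ∀ i, toQ (u i) ∈ I) (hgu : ∀ j, g j ∈ Submodule.span ℚ (Set.range fun i => toQ (u i))) :
    ∃ β : ℤ, β ≠ 0 ∧ ((|β| : ℤ) : ℝ) ≤ (Fintype.card ρ).factorial * H ^ Fintype.card ρ ∧
      ∀ j, ∃ z ∈ Submodule.span ℤ (Set.range u), toQ z = C (C (β : ℚ)) * g j ∧
        ∀ a b, ((|(z.coeff a).coeff b| : ℤ) : ℝ) ≤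
          (Fintype.card ρ).factorial * H ^ Fintype.card ρ := by
  obtain ⟨σ, e, he, hspan, hli⟩ := exists_linearIndependent' ℚ fun i => toQ (u i)
  have : Fintype σ := Fintype.ofInjective e he
  have hcard := Fintype.card_le_of_injective e he
  have hle : ((Fintype.card σ).factorial * H ^ Fintype.card σ : ℝ) ≤
      (Fintype.card ρ).factorial * H ^ Fintype.card ρ := by
    gcongr
  obtain ⟨β, hβ0, hβ, hz⟩ := hg.exists_integral_multiple_of_linearIndependent
    (zero_le_one.trans hH) (fun i => hu (e i)) (fun i => huI (e i)) hli (fun j => hspan ▸ hgu j)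
  refine ⟨β, hβ0, hβ.trans hle, fun j => ?_⟩
  obtain ⟨z, hzu, hzβ, hzle⟩ := hz j
  exact ⟨z, Submodule.span_mono (Set.range_comp_subset_range e u) hzu, hzβ,
    fun a b => (hzle a b).trans hle⟩

end IsReducedGB

end IntegralMultiple

section Macaulay

/-- The multiples of the `f i` by the monomials dividing `y ^ T * x ^ T`, i.e. the rows of a
Macaulay matrix of `f`. -/
def macaulayRows {ι : Type*} (f : ι → Biv k) (T : ℕ) (r : ι × Finset.Iic (T, T)) : Biv k :=
  monBasis k r.2 * f r.1

variable {ι : Type*} {T : ℕ}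

lemma bivMap_macaulayRows {R : Type*} [CommRing R] (φ : R →+* k) (f : ι → Biv R)
    (r : ι × Finset.Iic (T, T)) :
    bivMap φ (macaulayRows f T r) = macaulayRows (fun i => bivMap φ (f i)) T r := by
  rw [macaulayRows, map_mul, bivMap_monBasis, macaulayRows]

lemma macaulayRows_mem_span (f : ι → Biv k) (r : ι × Finset.Iic (T, T)) :
    macaulayRows f T r ∈ Ideal.span (Set.range f) :=
  Ideal.mul_mem_left _ _ (Ideal.subset_span ⟨r.1, rfl⟩)

lemma span_macaulayRows_le (f : ι → Biv k) :
    Submodule.span k (Set.range (macaulayRows f T)) ≤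
      (Ideal.span (Set.range f)).restrictScalars k :=
  Submodule.span_le.2 (Set.range_subset_iff.2 (macaulayRows_mem_span f))

lemma abs_coeff_macaulayRows_le {f : ι → Biv ℤ} {H : ℝ} (hH : 0 ≤ H)
    (hf : ∀ i a b, ((|((f i).coeff a).coeff b| : ℤ) : ℝ) ≤ H) (r : ι × Finset.Iic (T, T))
    (a b : ℕ) : ((|((macaulayRows f T r).coeff a).coeff b| : ℤ) : ℝ) ≤ H := by
  rw [macaulayRows, coeff_coeff_monBasis_mul r.2 (a, b)]
  split_ifs
  · exact hf ..
  · simpa using hH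

lemma mul_mem_span_macaulayRows (f : ι → Biv k) (i : ι) {p : Biv k} (hp : p ∈ totDegLE k T) :
    p * f i ∈ Submodule.span k (Set.range (macaulayRows f T)) := by
  refine Submodule.span_induction (p := fun p _ => p * f i ∈ _) ?_ ?_ ?_ ?_ hp
  · rintro _ ⟨m, hm, rfl⟩
    have hmT : m ∈ Finset.Iic (T, T) := by
      simp only [Set.mem_ofPred_eq, Finset.mem_Iic, Prod.le_def] at hm ⊢
      lia
    exact Submodule.subset_span ⟨(i, ⟨m, hmT⟩), rfl⟩
  · simp
  · intro p q _ _ hp hq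
    rw [add_mul]
    exact add_mem hp hq
  · intro c p _ hp
    rw [smul_mul_assoc]
    exact Submodule.smul_mem _ _ hp

theorem IsReducedGB.mem_span_macaulayRows {K : Type*} [Field K] [Infinite K] {f : Fin 2 → Biv K}
    [FiniteDimensional K (Biv K ⧸ Ideal.span (Set.range f))] {d : ℕ}
    (hf : ∀ i, f i ∈ totDegLE K d) {s : ℕ} {g : Fin (s + 1) → Biv K}
    (hg : IsReducedGB g (Ideal.span (Set.range f))) (j : Fin (s + 1)) :
    g j ∈ Submodule.span K (Set.range (macaulayRows f (2 * d ^ 2 + 2 * d))) := by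
  have hpair : Set.range f = {f 0, f 1} := by ext p; simp [eq_comm]
  have : FiniteDimensional K (Biv K ⧸ Ideal.span {f 0, f 1}) := hpair ▸ inferInstance
  have hrel : IsRelPrime (f 0) (f 1) := isRelPrime_of_finite_quotient_span_pair
  have hrank : Module.finrank K (Biv K ⧸ Ideal.span (Set.range f)) ≤ d * d :=
    hpair ▸ finrank_quotient_span_pair_le (hf 0) (hf 1) hrel
  obtain ⟨a, ha, b, hb, hab⟩ := exists_cofactors_mem_totDegLE (hf 0) (hf 1) hrel
    (totDegLE_mono hrank (hg.mem_totDegLE_finrank j)) (hpair ▸ hg.mem j)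
  rw [show d * d + d * d + d + d = 2 * d ^ 2 + 2 * d by ring] at ha hb
  exact hab ▸ add_mem (mul_mem_span_macaulayRows f 0 ha) (mul_mem_span_macaulayRows f 1 hb)

end Macaulay

section Numerics

lemma two_mul_sq_le_sq_two_mul_Delta2 (d : ℕ) :
    2 * (2 * d ^ 2 + 2 * d + 1) ^ 2 ≤ (2 * Delta2 d) ^ 2 := by
  have hd : d ≤ max d 3 := le_max_left d 3
  have hle : 3 * (2 * d ^ 2 + 2 * d + 1) ≤ 2 * (2 * Delta2 d) := by
    have h3 : 3 ≤ max d 3 := le_max_right d 3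
    rw [Delta2]
    nlinarith
  nlinarith

lemma factorial_mul_exp_pow_le_exp_Cfun {t d D r : ℕ} {h : ℝ} (hd : 1 ≤ d) (hh : 0 ≤ h)
    (hr : r ≤ (t * D) ^ 2) : r.factorial * Real.exp h ^ r ≤ Real.exp (Cfun t d D h) := by
  rw [Cfun, Bfun]
  set n := t * D
  set N := n ^ 2 * d - n * d + n
  have hrN : r ≤ N := by
    obtain ⟨e, rfl⟩ := Nat.exists_eq_add_of_le' hd
    have hne : n * e ≤ n ^ 2 * e := Nat.mul_le_mul_right e (Nat.le_self_pow two_ne_zero n)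
    lia
  have hfact : Real.log r.factorial ≤ N * Real.log N := by
    rw [← Real.log_pow]
    gcongr
    exact_mod_cast (Nat.factorial_le hrN).trans (Nat.factorial_le_pow N)
  have hexp : r * h ≤ N * h := by gcongr
  have hlog : 0 ≤ Real.log (n * (d + 1)) := by exact_mod_cast Real.log_natCast_nonneg (n * (d + 1))
  have hlog2 : 0 ≤ Real.log 2 := Real.log_nonneg one_le_two
  calc r.factorial * Real.exp h ^ r = Real.exp (Real.log r.factorial + r * h) := by
        rw [Real.exp_add, Real.exp_log (by positivity), Real.exp_nat_mul]
    _ ≤ _ := Real.exp_le_exp.2 (by linarith)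

end Numerics

section HeightBound

lemma one_le_of_abs_coeff_le {p : Biv ℤ} (hp : p ≠ 0) {H : ℝ}
    (hH : ∀ a b, ((|(p.coeff a).coeff b| : ℤ) : ℝ) ≤ H) : 1 ≤ H := by
  have habs : (1 : ℝ) ≤ ((|(p.coeff (lmon p).1).coeff (lmon p).2| : ℤ) : ℝ) := by
    exact_mod_cast Int.one_le_abs (occursIn_lmon hp)
  exact habs.trans (hH _ _)

namespace IsReducedGB

lemma exists_ne_zero {ι : Type*} {f : ι → Biv k} {s : ℕ} {g : Fin (s + 1) → Biv k}
    (hg : IsReducedGB g (Ideal.span (Set.range f))) : ∃ i, f i ≠ 0 := by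
  by_contra! hf
  obtain ⟨hg0, hgI⟩ := hg.1.1 (g 0) (List.mem_ofFn.2 ⟨0, rfl⟩)
  have hle : Ideal.span (Set.range f) ≤ ⊥ := Ideal.span_le.2 (Set.range_subset_iff.2 hf)
  exact hg0 (hle hgI)

theorem exists_integral_multiple_le_exp_Cfun {f : Fin 2 → Biv ℤ} {d : ℕ} (hd : 1 ≤ d) {h : ℝ}
    (hf : ∀ i, f i ∈ totDegLE ℤ d)
    (hfh : ∀ i (a b : ℕ), ((|((f i).coeff a).coeff b| : ℤ) : ℝ) ≤ Real.exp h)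
    [FiniteDimensional ℚ (Biv ℚ ⧸ Ideal.span (Set.range fun i => toQ (f i)))]
    {s : ℕ} {g : Fin (s + 1) → Biv ℚ}
    (hg : IsReducedGB g (Ideal.span (Set.range fun i => toQ (f i)))) :
    ∃ β : ℤ, β ≠ 0 ∧ ((|β| : ℤ) : ℝ) ≤ Real.exp (Cfun 2 d (Delta2 d) h) ∧
      ∀ j, ∃ z ∈ Ideal.span (Set.range f), toQ z = C (C (β : ℚ)) * g j ∧
        ∀ a b, ((|(z.coeff a).coeff b| : ℤ) : ℝ) ≤ Real.exp (Cfun 2 d (Delta2 d) h) := by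
  obtain ⟨i, hi⟩ := hg.exists_ne_zero
  have hexp : 1 ≤ Real.exp h := one_le_of_abs_coeff_le (fun h0 => hi (by simp [h0])) (hfh i)
  have hfℚ (i) : toQ (f i) ∈ totDegLE ℚ d := bivMap_mem_supportedOn (hf i)
  let rows := macaulayRows f (2 * d ^ 2 + 2 * d)
  have hrows (r) : toQ (rows r) = macaulayRows (fun i => toQ (f i)) (2 * d ^ 2 + 2 * d) r :=
    bivMap_macaulayRows (Int.castRingHom ℚ) f r
  have hcard : Fintype.card (Fin 2 × Finset.Iic (2 * d ^ 2 + 2 * d, 2 * d ^ 2 + 2 * d)) =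
      2 * (2 * d ^ 2 + 2 * d + 1) ^ 2 := by
    simp [Finset.card_Iic_prod, sq]
  have hle := factorial_mul_exp_pow_le_exp_Cfun hd (Real.one_le_exp_iff.1 hexp)
    (hcard.trans_le (two_mul_sq_le_sq_two_mul_Delta2 d))
  obtain ⟨β, hβ0, hβ, hz⟩ := hg.exists_integral_multiple (u := rows) hexp
    (abs_coeff_macaulayRows_le (Real.exp_pos h).le hfh)
    (fun r => hrows r ▸ macaulayRows_mem_span _ r)
    (fun j => by simpa only [hrows] using hg.mem_span_macaulayRows hfℚ j)
  refine ⟨β, hβ0, hβ.trans hle, fun j => ?_⟩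
  obtain ⟨z, hzrows, hzβ, hzle⟩ := hz j
  exact ⟨z, span_macaulayRows_le f hzrows, hzβ, fun a b => (hzle a b).trans hle⟩

end IsReducedGB

end HeightBound

/-- let `F = (f_1, f_2) ⊂ ℤ[x,y]` generate a zero-dimensional ideal
`I ⊆ ℚ[x,y]`, with total degrees at most `d ≥ 1` and coefficients of absolute value at
most `e^h`. Let `G = (g_0, …, g_s)` be the reduced minimal lexicographic Gröbner basis
of `I` (for `x ≺ y`). Then there is a nonzero integer `β` such that (a) all `β gⱼ`
have integer coefficients, (b) `|β|` and all coefficients of the `β gⱼ` are at most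
`exp (C(2,d,Δ₂(d),h))` in absolute value, and (c) for every prime `p ∤ β`, the images
of the `gⱼ` in `F_p[x,y]` form the reduced minimal lexicographic Gröbner basis of
`⟨f_1 mod p, f_2 mod p⟩`. -/
theorem height_bound_case2 {s : ℕ}
    (f : Fin 2 → Biv ℤ) (d : ℕ) (hd : 1 ≤ d) (h : ℝ)
    (htot : ∀ i, totDeg (f i) ≤ d)
    (hht : ∀ i (a b : ℕ), ((|((f i).coeff a).coeff b| : ℤ) : ℝ) ≤ Real.exp h)
    (I : Ideal (Biv ℚ)) (hI : I = Ideal.span (Set.range fun i => toQ (f i)))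
    (hdim : FiniteDimensional ℚ (Biv ℚ ⧸ I))
    (g : Fin (s + 1) → Biv ℚ) (hg : IsReducedGB g I) :
    ∃ β : ℤ, β ≠ 0 ∧
      ∃ gz : Fin (s + 1) → Biv ℤ,
        (∀ j, toQ (gz j) = Polynomial.C (Polynomial.C (β : ℚ)) * g j) ∧
        ((|β| : ℝ) ≤ Real.exp (Cfun 2 d (Delta2 d) h)) ∧
        (∀ j (a b : ℕ), ((|((gz j).coeff a).coeff b| : ℤ) : ℝ) ≤
          Real.exp (Cfun 2 d (Delta2 d) h)) ∧
        (∀ p : ℕ, p.Prime → ¬ ((p : ℤ) ∣ β) →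
          IsReducedGB
            (fun j => Polynomial.C (Polynomial.C ((β : ZMod p))⁻¹) * toP p (gz j))
            (Ideal.span (Set.range fun i => toP p (f i)))) := by
  subst hI
  obtain ⟨β, hβ0, hβ, hz⟩ := hg.exists_integral_multiple_le_exp_Cfun hd
    (fun i => totDeg_le_iff.1 (htot i)) hht
  choose gz hgzf hgz hgzle using hz
  refine ⟨β, hβ0, gz, hgz, by exact_mod_cast hβ, hgzle, fun p hp hpβ => ?_⟩
  have : Fact p.Prime := ⟨hp⟩
  have hmap {R : Type} [CommRing R] (φ : Biv ℤ →+* R) :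
      (Ideal.span (Set.range f)).map φ = Ideal.span (Set.range fun i => φ (f i)) := by
    rw [Ideal.map_span, ← Set.range_comp, Function.comp_def]
  rw [← hmap] at hg ⊢
  exact isReducedGB_toP hβ0 hpβ hgz hgzf hg
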